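/- Let k be an algebraically closed field of characteristic 0 and let (A,m,k) be the local ring of an algebraic variety over k. Let I be an m-primary ideal of A, h ∈ A, R = A[It], and S = A[It, ht] ⊆ A[t] (the subring generated by R and ht, graded by t-degree). If the induced map Proj(S) → Proj(R), q ↦ q ∩ R, is a homeomorphism (with respect to the Zariski topologies), then h belongs to the weak subintegral closure *I of I. -/

import Mathlib

set_option synthInstance.maxHeartbeats 400000
set_option maxHeartbeats 1000000

open Polynomial

/-- An element `b` is weakly subintegral over an ideal `I`; the set of such elements is
the weak subintegral closure `*I`. -/
def WSubIdeal {A : Type*} [CommRing A] (I : Ideal A) (b : A) : Prop :=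
  ∃ q : ℕ, ∃ a : ℕ → A, (∀ i, a i ∈ I ^ i) ∧
    ∀ n, q + 1 ≤ n → n ≤ 2 * q + 1 →
      b ^ n + ∑ i ∈ Finset.Icc 1 n, (n.choose i : A) * a i * b ^ (n - i) = 0

/-- An ideal `q` of a graded subring `W ⊆ A[t]` is homogeneous (grading by `t`-degree). -/
def IsHomogIdealIn {A : Type*} [CommRing A] (W : Subalgebra A (Polynomial A))
    (q : Ideal ↥W) : Prop :=
  ∀ x ∈ q, ∀ (n : ℕ) (hc : Polynomial.monomial n ((x : Polynomial A).coeff n) ∈ W),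
    (⟨_, hc⟩ : ↥W) ∈ q

/-- A homogeneous element of a graded subring `W ⊆ A[t]`: a monomial in `t`. -/
def IsHomogElem {A : Type*} [CommRing A] (W : Subalgebra A (Polynomial A)) (f : ↥W) : Prop :=
  ∃ n : ℕ, ∀ i ≠ n, (f : Polynomial A).coeff i = 0

/-- `Proj W` for a graded subring `W ⊆ A[t]`: homogeneous prime ideals of `W` not
containing the irrelevant ideal `W_+` (the elements with zero constant term). -/
def ProjOf {A : Type*} [CommRing A] (W : Subalgebra A (Polynomial A)) : Type _ :=
  {q : Ideal ↥W // q.IsPrime ∧ IsHomogIdealIn W q ∧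
    ∃ x : ↥W, (x : Polynomial A).coeff 0 = 0 ∧ x ∉ q}

/-- The Zariski topology on `Proj W`, generated by the basic open sets
`D(f) = {q | f ∉ q}` for homogeneous `f ∈ W`. -/
def projTopology {A : Type*} [CommRing A] (W : Subalgebra A (Polynomial A)) :
    TopologicalSpace (ProjOf W) :=
  TopologicalSpace.generateFrom
    {U | ∃ f : ↥W, IsHomogElem W f ∧ U = {q : ProjOf W | f ∉ q.val}}

/-!
Let `R = A[It]` and `S = A[It, ht]`. That every point of `Proj S` contracts to a point of `Proj R`
means that no point of `Proj S` contains `R₊`, so that some power of `ht` lies in `R₊S`; comparing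
homogeneous components, `ht` is integral over `R` and `S` is finite over `R`.

Injectivity makes every element of `S` a fraction of elements of `R` modulo the radical of `pS`, for
each prime `p` of `R`. If `p` does not contain some `a ∈ I`, this follows from `a · ht = h · at`.
Otherwise `p` contains the maximal ideal of `A`; then Galois theory (in characteristic 0) and the
Nullstellensatz reduce to maps from `S` to the residue field `K` of `A` which agree on `R`. Unless
they kill all `at`, and with them `ht`, they send `ht` to `c · at` for some `a ∈ I` and `c ∈ K`, and
the ratio `c` is determined by the homogeneous prime of `S` below the kernel, hence by its
contraction to `R`.

It follows that `R` can be joined to `S` by elementary steps `T ⊂ T + Tβ` with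
`(T + Tβ) / T ≃ T / p`. Descending along them from `P = 1` over `S`, one modifies the polynomial `P`
with `P(0) = 1` so that `P(x) exp(-ht x)` has coefficients in smaller and smaller rings, and finally
in `R`. If `cₙ tⁿ` is the degree `n` part of the `n`-th coefficient, the elements `aₙ = n! cₙ ∈ Iⁿ`
satisfy the equations of weak subintegrality for all `n > deg P`.
-/

section Colon

theorem exists_mem_colon_singleton_le {T M : Type*} [CommRing T] [AddCommGroup M] [Module T M]
    {p : Ideal T} [hp : p.IsPrime] {N U : Submodule T M} (hN : N.FG) (h : U.colon N ≤ p) :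
    ∃ y ∈ N, U.colon {y} ≤ p := by
  obtain ⟨s, rfl⟩ := hN
  have hinf : s.inf (fun y => U.colon {y}) ≤ p := fun t ht => h <| by
    rw [Submodule.colon_span, Submodule.mem_colon]
    intro y hy
    exact Submodule.mem_colon_singleton.mp (Finset.inf_le (f := fun y => U.colon {y}) hy ht)
  obtain ⟨y, hy, hyp⟩ := hp.inf_le'.mp hinf
  exact ⟨y, Submodule.subset_span hy, hyp⟩

theorem exists_not_colon_pow_le_of_mem_minimalPrimes {T : Type*} [CommRing T] [IsNoetherianRing T]
    {c p : Ideal T} (hp : p ∈ c.minimalPrimes) : ∃ n : ℕ, ¬ c.colon (p ^ n : Ideal T) ≤ p := by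
  have := hp.1.1
  let φ := algebraMap T (Localization.AtPrime p)
  obtain ⟨n, hn⟩ := Ideal.exists_pow_le_of_le_radical_of_fg
    (IsLocalization.AtPrime.radical_map_of_mem_minimalPrimes
      (A := Localization.AtPrime p) p c hp).ge
    (IsNoetherian.noetherian (p.map φ))
  refine ⟨n, fun hle => ?_⟩
  obtain ⟨y, hy, hyp⟩ := exists_mem_colon_singleton_le (IsNoetherian.noetherian _) hle
  rw [← Ideal.map_pow] at hn
  obtain ⟨s, hs, hsy⟩ := (IsLocalization.algebraMap_mem_map_algebraMap_iff p.primeCompl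
    (Localization.AtPrime p) c y).mp (hn (Ideal.mem_map_of_mem φ hy))
  exact hs (hyp (Submodule.mem_colon_singleton.mpr hsy))

end Colon

section ElementaryStep

variable {T S : Type*} [CommRing T] [CommRing S] [Algebra T S]

/-- All fibres of `Spec S → Spec T` are points with trivial residue field extension, or empty:
modulo the radical of the ideal generated by a prime `p` of `T`, every element of `S` is a fraction
of elements of `T` with denominator outside of `p`. -/
def HasLinearFibers (T S : Type*) [CommRing T] [CommRing S] [Algebra T S] : Prop :=
  ∀ p : Ideal T, p.IsPrime → ∀ y : S, ∃ s ∉ p, ∃ r : T,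
    s • y - algebraMap T S r ∈ (p.map (algebraMap T S)).radical

theorem HasLinearFibers.subalgebra (H : HasLinearFibers T S) (V : Subalgebra T S) :
    HasLinearFibers V S := by
  intro q hq y
  obtain ⟨s, hs, r, hr⟩ := H (q.comap (algebraMap T V)) (hq.comap _) y
  refine ⟨algebraMap T V s, hs, algebraMap T V r, ?_⟩
  rw [algebraMap_smul, ← IsScalarTower.algebraMap_apply]
  refine Ideal.radical_mono ?_ hr
  rw [IsScalarTower.algebraMap_eq T V S, ← Ideal.map_map]
  exact Ideal.map_mono Ideal.map_comap_le

/-- The data of a small enlargement `T ⊂ T + Tβ` of the image of `T` in `S`: near the prime `p` of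
`T`, which is the contraction of `N`, the ring `S` agrees with `T` modulo `N`, a power of `N` lies
in `T`, and `T + Tβ` is a ring with `(T + Tβ) / T ≃ T / p`. -/
structure IsElementaryStep (p : Ideal T) (N : Ideal S) (β : S) : Prop where
  isPrime : p.IsPrime
  exists_smul_sub_mem : ∀ y : S, ∃ s ∉ p, ∃ r : T, s • y - algebraMap T S r ∈ N
  comap_eq : N.comap (algebraMap T S) = p
  exists_smul_mem_bot : ∃ M : ℕ, ∃ s ∉ p, ∀ y ∈ N ^ M, s • y ∈ (⊥ : Subalgebra T S)
  mem : β ∈ N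
  sq_mem : β ^ 2 ∈ (⊥ : Subalgebra T S)
  smul_mem_iff : ∀ t : T, t • β ∈ (⊥ : Subalgebra T S) ↔ t ∈ p

theorem comap_radical_map_eq [Algebra.IsIntegral T S] {p : Ideal T} (hp : p.IsPrime)
    (hker : RingHom.ker (algebraMap T S) ≤ p) :
    (p.map (algebraMap T S)).radical.comap (algebraMap T S) = p := by
  obtain ⟨Q, -, hQ, rfl⟩ := Ideal.exists_ideal_over_prime_of_isIntegral p ⊥ hker
  refine le_antisymm (Ideal.comap_mono (hQ.radical_le_iff.mpr Ideal.map_comap_le)) ?_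
  exact Ideal.map_le_iff_le_comap.mp Ideal.le_radical

theorem exists_not_colon_radical_map_pow_le [IsNoetherianRing T] [Module.Finite T S]
    {U : Submodule T S} {p : Ideal T} (hp : p ∈ (U.colon Set.univ).minimalPrimes) :
    ∃ M : ℕ, ¬ U.colon ((p.map (algebraMap T S)).radical ^ M : Ideal S) ≤ p := by
  have : IsNoetherianRing S := .of_finite T S
  obtain ⟨n, hn⟩ := exists_not_colon_pow_le_of_mem_minimalPrimes hp
  obtain ⟨M, hM⟩ := Ideal.exists_radical_pow_le_of_fg (p.map (algebraMap T S))
    (IsNoetherian.noetherian _)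
  obtain ⟨s, hs, hsp⟩ := SetLike.not_le_iff_exists.mp hn
  have hpow : ((p.map (algebraMap T S)).radical ^ (M * n)).restrictScalars T ≤ p ^ n • ⊤ := by
    rw [Ideal.smul_top_eq_map, Ideal.map_pow, pow_mul]
    exact Ideal.pow_right_mono hM n
  refine ⟨M * n, fun hle => hsp (hle (Submodule.mem_colon.mpr fun y hy => ?_))⟩
  refine Submodule.smul_induction_on (hpow hy) (fun t ht z _ => ?_) fun y z hy hz => ?_
  · rw [← smul_assoc s t z]
    exact Submodule.mem_colon.mp (Submodule.mem_colon.mp hs t ht) z trivial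
  · exact smul_add s y z ▸ U.add_mem hy hz

theorem colon_le_of_forall_exists_smul_sub_mem [IsNoetherianRing T] [Module.Finite T S]
    {p : Ideal T} (hp : p.IsPrime) {N : Ideal S}
    (hfrac : ∀ y : S, ∃ s ∉ p, ∃ r : T, s • y - algebraMap T S r ∈ N)
    (huniv : (Subalgebra.toSubmodule (⊥ : Subalgebra T S)).colon Set.univ ≤ p) :
    (Subalgebra.toSubmodule (⊥ : Subalgebra T S)).colon N ≤ p := by
  set U : Submodule T S := Subalgebra.toSubmodule ⊥
  intro s hs
  by_contra hsp
  obtain ⟨y, -, hy⟩ := exists_mem_colon_singleton_le (N := ⊤) (IsNoetherian.noetherian _)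
    (Submodule.top_coe (R := T) (M := S) ▸ huniv)
  obtain ⟨s', hs', r, hr⟩ := hfrac y
  have hmem : s • (s' • y - algebraMap T S r) ∈ U := Submodule.mem_colon.mp hs _ hr
  rw [smul_sub, U.sub_mem_iff_left (U.smul_mem s (Subalgebra.algebraMap_mem ⊥ r)), smul_smul]
    at hmem
  exact (hp.mem_or_mem (hy (Submodule.mem_colon_singleton.mpr hmem))).elim hsp hs'

theorem exists_colon_pow_le_and_not_colon_pow_succ_le {U : Submodule T S} {p : Ideal T}
    {N : Ideal S} (h1 : U.colon N ≤ p) (hpow : ∃ M, ¬ U.colon (N ^ M : Ideal S) ≤ p) :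
    ∃ j ≠ 0, U.colon (N ^ j : Ideal S) ≤ p ∧ ¬ U.colon (N ^ (j + 1) : Ideal S) ≤ p := by
  by_contra! H
  suffices ∀ M, U.colon (N ^ M : Ideal S) ≤ p from hpow.elim fun M hM => hM (this M)
  intro M
  induction M with
  | zero => exact (Submodule.colon_mono le_rfl (by simp)).trans h1
  | succ j ih =>
    rcases eq_or_ne j 0 with rfl | hj
    · simpa using h1
    · exact H j hj ih

theorem exists_isElementaryStep_of_colon_le [IsNoetherianRing T] [Module.Finite T S]
    {p : Ideal T} (hp : p.IsPrime) {N : Ideal S}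
    (hfrac : ∀ y : S, ∃ s ∉ p, ∃ r : T, s • y - algebraMap T S r ∈ N)
    (hcomap : N.comap (algebraMap T S) = p)
    (hpow : ∃ M, ¬ (Subalgebra.toSubmodule (⊥ : Subalgebra T S)).colon (N ^ M : Ideal S) ≤ p)
    (huniv : (Subalgebra.toSubmodule (⊥ : Subalgebra T S)).colon Set.univ ≤ p) :
    ∃ β, IsElementaryStep p N β := by
  set U : Submodule T S := Subalgebra.toSubmodule ⊥
  obtain ⟨j, hj0, hj, hj'⟩ := exists_colon_pow_le_and_not_colon_pow_succ_le
    (colon_le_of_forall_exists_smul_sub_mem hp hfrac huniv) hpow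
  obtain ⟨s, hsU, hs⟩ := SetLike.not_le_iff_exists.mp hj'
  obtain ⟨y, hy, hyp⟩ := exists_mem_colon_singleton_le
    (IsNoetherian.noetherian ((N ^ j).restrictScalars T)) hj
  have hsy : s • y ∈ N ^ j := Submodule.smul_of_tower_mem _ s hy
  have hmul : ∀ z ∈ N, s • (y * z) ∈ U := fun z hz =>
    Submodule.mem_colon.mp hsU _ (pow_succ N j ▸ Ideal.mul_mem_mul hy hz)
  have hsyN : s • y ∈ N := Ideal.pow_le_self hj0 hsy
  refine ⟨s • y, hp, hfrac, hcomap, ?_, hsyN, ?_, fun t => ⟨fun ht => ?_, fun ht => ?_⟩⟩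
  · obtain ⟨M, hM⟩ := hpow
    obtain ⟨t, ht, htp⟩ := SetLike.not_le_iff_exists.mp hM
    exact ⟨M, t, htp, Submodule.mem_colon.mp ht⟩
  · rw [sq, smul_mul_assoc]
    exact hmul _ hsyN
  · rw [smul_smul] at ht
    exact (hp.mem_or_mem (hyp (Submodule.mem_colon_singleton.mpr ht))).resolve_right hs
  · rw [smul_comm, Algebra.smul_def t, mul_comm]
    exact hmul _ (Ideal.mem_comap.mp (hcomap.ge ht))

theorem HasLinearFibers.exists_isElementaryStep [IsNoetherianRing T] [Module.Finite T S]
    (H : HasLinearFibers T S) (hne : (⊥ : Subalgebra T S) ≠ ⊤) :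
    ∃ (p : Ideal T) (N : Ideal S) (β : S), IsElementaryStep p N β := by
  set U : Submodule T S := Subalgebra.toSubmodule ⊥
  have hU : U.colon Set.univ ≠ ⊤ := fun h => hne <| SetLike.coe_injective <|
    Set.univ_subset_iff.mp ((Submodule.colon_eq_top_iff_subset _).mp h)
  obtain ⟨m, hm, hle⟩ := Ideal.exists_le_maximal _ hU
  have := hm.isPrime
  obtain ⟨p, hp, -⟩ := Ideal.exists_minimalPrimes_le hle
  have hker : RingHom.ker (algebraMap T S) ≤ U.colon Set.univ := fun t ht =>
    Submodule.mem_colon.mpr fun y _ => by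
      rw [Algebra.smul_def, RingHom.mem_ker.mp ht, zero_mul]
      exact U.zero_mem
  exact ⟨p, _, exists_isElementaryStep_of_colon_le hp.1.1 (H p hp.1.1)
    (comap_radical_map_eq hp.1.1 (hker.trans hp.1.2)) (exists_not_colon_radical_map_pow_le hp)
    hp.1.2⟩

end ElementaryStep

section Denominators

variable {T S : Type*} [CommRing T] [CommRing S] [Algebra T S] [Algebra.IsIntegral T S]

theorem exists_monic_dvd_map {D : S[X]} (hD : D.Monic) :
    ∃ u : T[X], u.Monic ∧ D ∣ u.map (algebraMap T S) := by
  have : Module.Finite S (AdjoinRoot D) := hD.finite_adjoinRoot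
  obtain ⟨u, hu, hroot⟩ : IsIntegral T (AdjoinRoot.root D) :=
    isIntegral_trans (A := S) _ (Algebra.IsIntegral.isIntegral _)
  refine ⟨u, hu, ?_⟩
  rw [← AdjoinRoot.mk_eq_zero, ← AdjoinRoot.aeval_eq, aeval_map_algebraMap]
  exact hroot

theorem exists_map_eq_mul_of_coeff_zero_eq_one {P : S[X]} (hP : P.coeff 0 = 1) :
    ∃ (U : T[X]) (W : S[X]), U.coeff 0 = 1 ∧ U.map (algebraMap T S) = P * W := by
  rcases subsingleton_or_nontrivial S with _ | _
  · exact ⟨1, 0, coeff_one_zero, Subsingleton.elim _ _⟩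
  have htrail : P.natTrailingDegree = 0 := natTrailingDegree_eq_zero.mpr (Or.inr (by simp [hP]))
  have hmonic : P.reverse.Monic := by
    rw [Monic, reverse_leadingCoeff, trailingCoeff, htrail, hP]
  have hrev : P.reverse.reverse = P := by
    rw [reverse, reverse_natDegree, htrail, Nat.sub_zero, reverse]
    ext n
    simp only [coeff_reflect, revAt_invol]
  obtain ⟨u, hu, w, hw⟩ := exists_monic_dvd_map (T := T) hmonic
  have humap := hu.map (algebraMap T S)
  have hlead : P.reverse.leadingCoeff * w.leadingCoeff ≠ 0 := by
    rw [hmonic, one_mul, leadingCoeff_ne_zero]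
    rintro rfl
    exact humap.ne_zero (by rw [hw, mul_zero])
  refine ⟨u.reverse, w.reverse, by rw [coeff_zero_reverse, hu], ?_⟩
  rw [reverse, ← reflect_map, ← hu.natDegree_map (algebraMap T S), ← reverse, hw,
    reverse_mul hlead, hrev]

end Denominators

section PowerSeriesCoefficients

open Filter PowerSeries

theorem eventually_coeff_rescale_coe_eq_zero {S : Type*} [CommRing S] (s : S) (P : S[X]) :
    ∀ᶠ m in atTop, PowerSeries.coeff m (rescale s (P : S⟦X⟧)) = 0 := by
  filter_upwards [eventually_gt_atTop P.natDegree] with m hm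
  rw [coeff_rescale, Polynomial.coeff_coe, coeff_eq_zero_of_natDegree_lt hm, mul_zero]

theorem eventually_coeff_mul_mem {S : Type*} [CommRing S] {J : Ideal S} {Q G : S⟦X⟧}
    (hQ : ∀ᶠ m in atTop, PowerSeries.coeff m Q = 0)
    (hG : ∀ᶠ m in atTop, PowerSeries.coeff m G ∈ J) :
    ∀ᶠ m in atTop, PowerSeries.coeff m (Q * G) ∈ J := by
  obtain ⟨K, hK⟩ := eventually_atTop.mp hQ
  obtain ⟨L, hL⟩ := eventually_atTop.mp hG
  filter_upwards [eventually_ge_atTop (K + L)] with m hm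
  rw [PowerSeries.coeff_mul]
  refine J.sum_mem fun ⟨i, j⟩ hij => ?_
  have hij : i + j = m := by simpa using hij
  rcases le_or_gt K i with hi | hi
  · simp [hK i hi]
  · exact J.mul_mem_left _ (hL j (by omega))

theorem eventually_coeff_rescale_exp_mem_pow {S : Type*} [CommRing S] [Algebra ℚ S] {N : Ideal S}
    {n : S} (hn : n ∈ N) (M : ℕ) :
    ∀ᶠ m in atTop, PowerSeries.coeff m (rescale n (exp S)) ∈ N ^ M := by
  filter_upwards [eventually_ge_atTop M] with m hm
  rw [coeff_rescale]
  exact Ideal.mul_mem_right _ _ (Ideal.pow_le_pow_right hm (Ideal.pow_mem_pow hn m))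

theorem constantCoeff_rescale_exp {S : Type*} [CommRing S] [Algebra ℚ S] (b : S) :
    constantCoeff (rescale b (exp S)) = 1 := by
  simp [← coeff_zero_eq_constantCoeff_apply, coeff_rescale, coeff_exp]

theorem rescale_exp_mul_rescale_exp_neg {S : Type*} [CommRing S] [Algebra ℚ S] (b : S) :
    rescale b (exp S) * rescale (-b) (exp S) = 1 := by
  rw [exp_mul_exp_eq_exp_add, add_neg_cancel, rescale_zero_apply, constantCoeff_exp, map_one]

theorem map_rescale_exp {T S : Type*} [CommRing T] [CommRing S] [Algebra ℚ T] [Algebra ℚ S]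
    (φ : T →+* S) (r : T) :
    PowerSeries.map φ (rescale r (exp T)) = rescale (φ r) (exp S) := by
  rw [← rescale_map, map_exp]

theorem map_mk_rescale_exp {S : Type*} [CommRing S] [Algebra ℚ S] {N : Ideal S} {n : S}
    (hn : n ∈ N) :
    PowerSeries.map (Ideal.Quotient.mk N) (rescale n (exp S)) = 1 := by
  let _ : Algebra ℚ (S ⧸ N) := ((Ideal.Quotient.mk N).comp (algebraMap ℚ S)).toAlgebra
  rw [map_rescale_exp, Ideal.Quotient.eq_zero_iff_mem.mpr hn, rescale_zero_apply,
    constantCoeff_exp, map_one]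

theorem rescale_C {S : Type*} [CommRing S] (s b : S) :
    rescale s (PowerSeries.C b) = PowerSeries.C b := by
  ext m
  rcases m with _ | m <;> simp [PowerSeries.coeff_C]

end PowerSeriesCoefficients

section Descent

open Filter PowerSeries

variable {T S : Type*} [CommRing T] [CommRing S] [Algebra T S]

theorem exists_eq_map_add_C_mul_map {β : S} {f : S⟦X⟧} (hf0 : constantCoeff f = 1)
    (hf : ∀ n, ∃ t₀ t₁ : T, PowerSeries.coeff n f = algebraMap T S t₀ + t₁ • β) :
    ∃ F g : T⟦X⟧, constantCoeff g = 0 ∧ f = PowerSeries.map (algebraMap T S) F +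
      PowerSeries.C β * PowerSeries.map (algebraMap T S) (g * F) := by
  obtain ⟨t₀, t₁, h₀, h₁, ht⟩ : ∃ t₀ t₁ : ℕ → T, t₀ 0 = 1 ∧ t₁ 0 = 0 ∧
      ∀ n, PowerSeries.coeff n f = algebraMap T S (t₀ n) + t₁ n • β := by
    choose t₀ t₁ ht using hf
    refine ⟨Function.update t₀ 0 1, Function.update t₁ 0 0, by simp, by simp, fun n => ?_⟩
    rcases eq_or_ne n 0 with rfl | hn
    · simp [hf0]
    · simp [hn, ht]
  obtain ⟨u, hu⟩ : IsUnit (PowerSeries.mk t₀) := by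
    simp [PowerSeries.isUnit_iff_constantCoeff, ← coeff_zero_eq_constantCoeff_apply, h₀]
  refine ⟨PowerSeries.mk t₀, PowerSeries.mk t₁ * ↑u⁻¹, ?_, ?_⟩
  · rw [map_mul, ← coeff_zero_eq_constantCoeff_apply, PowerSeries.coeff_mk, h₁, zero_mul]
  · rw [← hu, Units.inv_mul_cancel_right, hu]
    ext n
    simp [ht, Algebra.smul_def, mul_comm]

namespace IsElementaryStep

variable {p : Ideal T} {N : Ideal S} {β : S}

theorem algebraMap_mem_iff (H : IsElementaryStep p N β) {t : T} :
    algebraMap T S t ∈ N ↔ t ∈ p := by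
  rw [← Ideal.mem_comap, H.comap_eq]

variable [Algebra ℚ S]

theorem eventually_coeff_mem (H : IsElementaryStep p N β) {n : S} (hn : n ∈ N) {Q : S⟦X⟧}
    (hQ : ∀ᶠ m in atTop, PowerSeries.coeff m Q = 0) {G₀ G₁ : T⟦X⟧}
    (hG : PowerSeries.map (algebraMap T S) G₀ +
      PowerSeries.C β * PowerSeries.map (algebraMap T S) G₁ = Q * rescale n (exp S)) :
    ∀ᶠ m in atTop, PowerSeries.coeff m G₁ ∈ p := by
  obtain ⟨M, s, hs, hM⟩ := H.exists_smul_mem_bot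
  filter_upwards [eventually_coeff_mul_mem hQ (eventually_coeff_rescale_exp_mem_pow hn M)]
    with m hm
  have hsum : s • algebraMap T S (PowerSeries.coeff m G₀) +
      (s * PowerSeries.coeff m G₁) • β ∈ (⊥ : Subalgebra T S) := by
    convert hM _ hm using 1
    rw [← hG, map_add, PowerSeries.coeff_C_mul, PowerSeries.coeff_map, PowerSeries.coeff_map,
      smul_add, mul_comm β, ← Algebra.smul_def, mul_smul]
  have hbase : s • algebraMap T S (PowerSeries.coeff m G₀) ∈ (⊥ : Subalgebra T S) :=
    Subalgebra.smul_mem _ (Subalgebra.algebraMap_mem _ _) _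
  have hβ : (s * PowerSeries.coeff m G₁) • β ∈ (⊥ : Subalgebra T S) := by
    simpa using Subalgebra.sub_mem _ hsum hbase
  exact (H.isPrime.mem_or_mem ((H.smul_mem_iff _).mp hβ)).resolve_left hs

/- Writing `s b = n + r`, the substitution `x ↦ s x` turns `exp(bx)` into `exp(rx) exp(nx)`, where
`exp(rx)` is a unit of `T⟦x⟧` and almost all coefficients of `exp(nx)` lie in any given power of
`N`. -/
theorem exists_map_add_eq_rescale_mul [Algebra ℚ T] (H : IsElementaryStep p N β) {b : S}
    {P : S[X]} {F g : T⟦X⟧}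
    (hF : (P : S⟦X⟧) * rescale b (exp S) = PowerSeries.map (algebraMap T S) F +
      PowerSeries.C β * PowerSeries.map (algebraMap T S) (g * F)) :
    ∃ s ∉ p, ∃ n ∈ N, ∃ G : T⟦X⟧, PowerSeries.map (algebraMap T S) G +
      PowerSeries.C β * PowerSeries.map (algebraMap T S) (rescale s g * G) =
        rescale (algebraMap T S s) (P : S⟦X⟧) * rescale n (exp S) := by
  obtain ⟨s, hs, r, hn⟩ := H.exists_smul_sub_mem b
  set σ := algebraMap T S s
  set φ := PowerSeries.map (algebraMap T S) with hφ
  set n := s • b - algebraMap T S r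
  have hsb : b * σ = n + algebraMap T S r := by
    rw [sub_add_cancel, Algebra.smul_def, mul_comm]
  have hrescale := congrArg (rescale σ) hF
  have hσφ (Q : T⟦X⟧) : rescale σ (φ Q) = φ (rescale s Q) := rescale_map _ _ _
  have hexp : φ (rescale r (exp T)) * φ (rescale (-r) (exp T)) = 1 := by
    rw [← map_mul, rescale_exp_mul_rescale_exp_neg, map_one]
  rw [map_mul, rescale_rescale, hsb, ← exp_mul_exp_eq_exp_add, ← map_rescale_exp, ← hφ, map_add,
    map_mul, rescale_C, hσφ, hσφ] at hrescale
  refine ⟨s, hs, n, hn, rescale s F * rescale (-r) (exp T), ?_⟩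
  calc _ = (φ (rescale s F) + PowerSeries.C β * φ (rescale s (g * F))) *
        φ (rescale (-r) (exp T)) := by simp only [map_mul]; ring
    _ = rescale σ (P : S⟦X⟧) * rescale n (exp S) *
        (φ (rescale r (exp T)) * φ (rescale (-r) (exp T))) := by rw [← hrescale]; ring
    _ = _ := by rw [hexp, mul_one]

theorem eventually_coeff_denominator_mul_mem [Algebra ℚ T] (H : IsElementaryStep p N β) {b : S}
    {P W : S[X]} {U : T[X]} (hU : U.map (algebraMap T S) = P * W) {F g : T⟦X⟧}
    (hF : (P : S⟦X⟧) * rescale b (exp S) = PowerSeries.map (algebraMap T S) F +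
      PowerSeries.C β * PowerSeries.map (algebraMap T S) (g * F)) :
    ∀ᶠ m in atTop, PowerSeries.coeff m ((U : T⟦X⟧) * g) ∈ p := by
  obtain ⟨s, hs, n, hn, G, hG⟩ := H.exists_map_add_eq_rescale_mul hF
  set σ := algebraMap T S s
  set φ := PowerSeries.map (algebraMap T S) with hφ
  set Φ := PowerSeries.map (Ideal.Quotient.mk N) with hΦ
  have hΦG : Φ (φ G) = Φ (rescale σ (P : S⟦X⟧)) := by
    have hΦβ : Φ (PowerSeries.C β) = 0 := by
      rw [hΦ, PowerSeries.map_C, Ideal.Quotient.eq_zero_iff_mem.mpr H.mem, map_zero]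
    have hΦn : Φ (rescale n (exp S)) = 1 := map_mk_rescale_exp hn
    simpa only [map_add, map_mul, hΦβ, hΦn, zero_mul, add_zero, mul_one] using congrArg Φ hG
  have hUφ : φ (rescale s (U : T⟦X⟧)) = rescale σ (P : S⟦X⟧) * rescale σ (W : S⟦X⟧) := by
    rw [hφ, ← rescale_map, ← Polynomial.polynomial_map_coe, hU, Polynomial.coe_mul, map_mul]
  have hΦUg : Φ (φ (rescale s ((U : T⟦X⟧) * g))) =
      Φ (rescale σ (W : S⟦X⟧) * φ (rescale s g * G)) := by
    simp only [map_mul, hUφ, hΦG]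
    ring
  have hG₁ := H.eventually_coeff_mem hn (eventually_coeff_rescale_coe_eq_zero σ P) hG
  have hN : ∀ᶠ m in atTop, PowerSeries.coeff m (rescale σ (W : S⟦X⟧) * φ (rescale s g * G)) ∈ N :=
    eventually_coeff_mul_mem (eventually_coeff_rescale_coe_eq_zero σ W) <| hG₁.mono
      fun m hm => by rwa [hφ, PowerSeries.coeff_map, H.algebraMap_mem_iff]
  filter_upwards [hN] with m hm
  rw [← Ideal.Quotient.eq_zero_iff_mem, ← PowerSeries.coeff_map, ← hΦ, ← hΦUg, hΦ,
    PowerSeries.coeff_map, hφ, PowerSeries.coeff_map, Ideal.Quotient.eq_zero_iff_mem,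
    H.algebraMap_mem_iff, coeff_rescale] at hm
  exact (H.isPrime.mem_or_mem hm).resolve_left fun h => hs (H.isPrime.mem_of_pow_mem _ h)

theorem exists_coeff_mul_exp_mem_bot [Algebra ℚ T] [Algebra.IsIntegral T S]
    (H : IsElementaryStep p N β) {b : S} {P : S[X]} (hP : P.coeff 0 = 1)
    (hf : ∀ n, ∃ t₀ t₁ : T, PowerSeries.coeff n ((P : S⟦X⟧) * rescale b (exp S)) =
      algebraMap T S t₀ + t₁ • β) :
    ∃ P' : S[X], P'.coeff 0 = 1 ∧
      ∀ n, PowerSeries.coeff n ((P' : S⟦X⟧) * rescale b (exp S)) ∈ (⊥ : Subalgebra T S) := by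
  set φ := PowerSeries.map (algebraMap T S) with hφ
  obtain ⟨F, g, hg, hF⟩ := exists_eq_map_add_C_mul_map
    (by rw [map_mul, constantCoeff_rescale_exp, Polynomial.constantCoeff_coe, hP, mul_one]) hf
  -- Here `P exp(bx) = F (1 + β g)`. All but finitely many coefficients of `U g` lie in `p`; let `v`
  -- collect the others. Then `(U - β v) F (1 + β g) = U F - β² v g F + β F (U g - v)`, where each
  -- term has coefficients in `T`.
  obtain ⟨U, W, hU0, hU⟩ := exists_map_eq_mul_of_coeff_zero_eq_one (T := T) hP
  obtain ⟨L, hL⟩ := eventually_atTop.mp (H.eventually_coeff_denominator_mul_mem hU hF)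
  set v := trunc L ((U : T⟦X⟧) * g) with hv
  have hvp (m : ℕ) : PowerSeries.coeff m ((U : T⟦X⟧) * g - (v : T⟦X⟧)) ∈ p := by
    rw [map_sub, Polynomial.coeff_coe, hv, coeff_trunc]
    split_ifs with h
    · simp
    · rw [sub_zero]
      exact hL m (not_lt.mp h)
  have hv0 : v.coeff 0 = 0 := by simp [hv, coeff_trunc, hg]
  refine ⟨(U.map (algebraMap T S) - Polynomial.C β * v.map (algebraMap T S)) * P, ?_, fun m => ?_⟩
  · simp [mul_coeff_zero, hU0, hv0, hP]
  have hprod : (((U.map (algebraMap T S) - Polynomial.C β * v.map (algebraMap T S)) * P : S[X]) :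
      S⟦X⟧) * rescale b (exp S) = φ ((U : T⟦X⟧) * F) -
        PowerSeries.C (β ^ 2) * φ ((v : T⟦X⟧) * (g * F)) +
        PowerSeries.C β * φ (F * ((U : T⟦X⟧) * g - (v : T⟦X⟧))) := by
    rw [Polynomial.coe_mul, mul_assoc, hF, Polynomial.coe_sub, Polynomial.coe_mul,
      Polynomial.polynomial_map_coe, Polynomial.polynomial_map_coe, Polynomial.coe_C, ← hφ]
    simp only [map_mul, map_sub, map_pow]
    ring
  rw [hprod, map_add, map_sub, PowerSeries.coeff_C_mul, PowerSeries.coeff_C_mul, hφ]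
  simp only [PowerSeries.coeff_map]
  refine Subalgebra.add_mem _ (Subalgebra.sub_mem _ (Subalgebra.algebraMap_mem _ _)
    (Subalgebra.mul_mem _ H.sq_mem (Subalgebra.algebraMap_mem _ _))) ?_
  rw [mul_comm, ← Algebra.smul_def, H.smul_mem_iff, PowerSeries.coeff_mul]
  exact p.sum_mem fun _ _ => p.mul_mem_left _ (hvp _)

end IsElementaryStep

theorem exists_eq_algebraMap_add_smul_of_mem_adjoin_singleton {β : S}
    (hβ : β ^ 2 ∈ (⊥ : Subalgebra T S)) {y : S} (hy : y ∈ Algebra.adjoin T {β}) :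
    ∃ t₀ t₁ : T, y = algebraMap T S t₀ + t₁ • β := by
  obtain ⟨c, hc⟩ := Algebra.mem_bot.mp hβ
  induction hy using Algebra.adjoin_induction with
  | mem x hx => exact ⟨0, 1, by rw [hx, map_zero, one_smul, zero_add]⟩
  | algebraMap t => exact ⟨t, 0, by rw [zero_smul, add_zero]⟩
  | add x y _ _ hx hy =>
    obtain ⟨t₀, t₁, rfl⟩ := hx
    obtain ⟨u₀, u₁, rfl⟩ := hy
    refine ⟨t₀ + u₀, t₁ + u₁, ?_⟩
    rw [map_add, add_smul, add_add_add_comm]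
  | mul x y _ _ hx hy =>
    obtain ⟨t₀, t₁, rfl⟩ := hx
    obtain ⟨u₀, u₁, rfl⟩ := hy
    refine ⟨t₀ * u₀ + t₁ * u₁ * c, t₀ * u₁ + t₁ * u₀, ?_⟩
    simp only [Algebra.smul_def, map_add, map_mul, hc]
    ring

theorem HasLinearFibers.exists_coeff_mul_exp_mem_bot [Algebra ℚ T] [Algebra ℚ S]
    [IsNoetherianRing T] [Module.Finite T S] (H : HasLinearFibers T S) (b : S) :
    ∃ P : S[X], P.coeff 0 = 1 ∧
      ∀ n, PowerSeries.coeff n ((P : S⟦X⟧) * rescale b (exp S)) ∈ (⊥ : Subalgebra T S) := by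
  have hwf : WellFoundedGT (Subalgebra T S) :=
    StrictMono.wellFoundedGT (f := Subalgebra.toSubmodule) fun _ _ h => h
  suffices ∀ V : Subalgebra T S, ∃ P : S[X], P.coeff 0 = 1 ∧
      ∀ n, PowerSeries.coeff n ((P : S⟦X⟧) * rescale b (exp S)) ∈ V from this ⊥
  intro V
  induction V using WellFoundedGT.induction with
  | ind V ih =>
  rcases eq_or_ne V ⊤ with rfl | hV
  · exact ⟨1, coeff_one_zero, fun _ => Algebra.mem_top⟩
  let _ : Algebra ℚ V := ((algebraMap T V).comp (algebraMap ℚ T)).toAlgebra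
  have : Module.Finite V S := .of_restrictScalars_finite T V S
  have : Module.Finite T V := .of_fg (IsNoetherian.noetherian (Subalgebra.toSubmodule V))
  have : IsNoetherianRing V := .of_finite T V
  have hbot (y : S) : y ∈ (⊥ : Subalgebra V S) ↔ y ∈ V := by
    rw [Algebra.mem_bot, Subalgebra.algebraMap_eq]
    simp
  have hne : (⊥ : Subalgebra V S) ≠ ⊤ := fun h =>
    hV (eq_top_iff.mpr fun y _ => (hbot y).mp (h ▸ Algebra.mem_top))
  obtain ⟨p, N, β, hstep⟩ := (H.subalgebra V).exists_isElementaryStep hne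
  have hβ : β ∉ V := fun h =>
    hstep.isPrime.one_notMem ((hstep.smul_mem_iff 1).mp (by rwa [one_smul, hbot]))
  have hlt : V < (Algebra.adjoin V {β}).restrictScalars T := by
    refine SetLike.lt_iff_le_and_exists.mpr
      ⟨fun y hy => ?_, β, Algebra.self_mem_adjoin_singleton V β, hβ⟩
    exact (Algebra.adjoin V {β}).algebraMap_mem ⟨y, hy⟩
  obtain ⟨P, hP, hf⟩ := ih _ hlt
  obtain ⟨P', hP', hf'⟩ := hstep.exists_coeff_mul_exp_mem_bot hP fun n =>
    exists_eq_algebraMap_add_smul_of_mem_adjoin_singleton hstep.sq_mem (hf n)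
  exact ⟨P', hP', fun n => (hbot _).mp (hf' n)⟩

end Descent

section WeakSubintegrality

open PowerSeries

theorem factorial_mul_algebraMap_one_div_factorial {A : Type*} [CommRing A] [Algebra ℚ A]
    (i j : ℕ) : ((i + j).factorial : A) * algebraMap ℚ A (1 / j.factorial) =
      (i + j).choose i * i.factorial := by
  have hj : (j.factorial : ℚ) ≠ 0 := mod_cast j.factorial_ne_zero
  have hℚ : ((i + j).factorial : ℚ) * (1 / j.factorial) = (i + j).choose i * i.factorial := by
    rw [mul_one_div, div_eq_iff hj, ← Nat.add_choose_mul_factorial_mul_factorial,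
      Nat.choose_symm_add]
    push_cast
    rfl
  simpa using congrArg (algebraMap ℚ A) hℚ

theorem factorial_mul_coeff_mul_rescale_exp {A : Type*} [CommRing A] [Algebra ℚ A] (a : A⟦X⟧)
    (h : A) (n : ℕ) : (n.factorial : A) * PowerSeries.coeff n (a * rescale h (exp A)) =
      ∑ i ∈ Finset.range (n + 1),
        (n.choose i : A) * (i.factorial * PowerSeries.coeff i a) * h ^ (n - i) := by
  rw [PowerSeries.coeff_mul, Finset.mul_sum, ← Finset.Nat.sum_antidiagonal_eq_sum_range_succ
    fun i j => (n.choose i : A) * (i.factorial * PowerSeries.coeff i a) * h ^ j]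
  refine Finset.sum_congr rfl fun ⟨i, j⟩ hij => ?_
  obtain rfl : i + j = n := by simpa using hij
  rw [coeff_rescale, coeff_exp]
  linear_combination PowerSeries.coeff i a * h ^ j *
    factorial_mul_algebraMap_one_div_factorial (A := A) i j

theorem wSubIdeal_of_coeff_mul_rescale_exp_eq_zero {A : Type*} [CommRing A] [Algebra ℚ A]
    {I : Ideal A} {h : A} {a : A⟦X⟧} (ha : ∀ n, PowerSeries.coeff n a ∈ I ^ n)
    (ha0 : constantCoeff a = 1) {q : ℕ}
    (hq : ∀ n > q, PowerSeries.coeff n (a * rescale h (exp A)) = 0) : WSubIdeal I h := by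
  refine ⟨q, fun i => i.factorial * PowerSeries.coeff i a, fun i => Ideal.mul_mem_left _ _ (ha i),
    fun n hn _ => ?_⟩
  have hsum := factorial_mul_coeff_mul_rescale_exp a h n
  rw [hq n (by omega), mul_zero, Finset.range_eq_Ico, Finset.sum_eq_sum_Ico_succ_bot
    (by omega : 0 < n + 1), zero_add, Finset.Ico_add_one_right_eq_Icc] at hsum
  simpa [ha0] using hsum.symm

theorem coeff_coeff_mul_rescale_monomial_exp {A : Type*} [CommRing A] [Algebra ℚ A]
    (F : A[X]⟦X⟧) (h : A) (n : ℕ) :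
    (PowerSeries.coeff n (F * rescale (Polynomial.monomial 1 h) (exp A[X]))).coeff n =
      PowerSeries.coeff n
        (PowerSeries.mk (fun i => (PowerSeries.coeff i F).coeff i) * rescale h (exp A)) := by
  simp only [PowerSeries.coeff_mul, Polynomial.finsetSum_coeff]
  refine Finset.sum_congr rfl fun ⟨i, j⟩ hij => ?_
  obtain rfl : i + j = n := by simpa using hij
  rw [coeff_rescale, coeff_exp, coeff_rescale, coeff_exp, coeff_mk,
    IsScalarTower.algebraMap_apply ℚ A A[X], Polynomial.algebraMap_eq, Polynomial.monomial_pow,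
    one_mul, monomial_mul_C, coeff_mul_monomial]

end WeakSubintegrality

section GeometricPoints

theorem apply_eq_of_forall_algHom_of_isAlgClosed {A K S L : Type*} [CommRing A] [Field K]
    [IsAlgClosed K] [Algebra A K] [CommRing S] [Algebra A S] [Algebra.FiniteType A S] [CommRing L]
    [IsDomain L] [Algebra A L] [Algebra K L] [IsScalarTower A K L] (Z : Set S) (b : S)
    (H : ∀ g₁ g₂ : S →ₐ[A] K, (∀ z ∈ Z, g₁ z = g₂ z) → g₁ b = g₂ b)
    (f₁ f₂ : S →ₐ[A] L) (hf : ∀ z ∈ Z, f₁ z = f₂ z) : f₁ b = f₂ b := by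
  classical
  obtain ⟨s, hs⟩ := Algebra.FiniteType.out (R := A) (A := S)
  let B : Subalgebra K L := Algebra.adjoin K (s.image f₁ ∪ s.image f₂ : Finset L)
  have hB (f : S →ₐ[A] L) (h : ∀ x ∈ s, f x ∈ B) (x : S) : f x ∈ B.restrictScalars A := by
    have hle : Algebra.adjoin A (s : Set S) ≤ (B.restrictScalars A).comap f :=
      Algebra.adjoin_le fun x hx => h x hx
    exact hle (hs ▸ Algebra.mem_top)
  let φ₁ : S →ₐ[A] B := f₁.codRestrict (B.restrictScalars A) <| hB f₁ fun x hx =>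
    Algebra.subset_adjoin (Finset.mem_union_left _ (Finset.mem_image_of_mem f₁ hx))
  let φ₂ : S →ₐ[A] B := f₂.codRestrict (B.restrictScalars A) <| hB f₂ fun x hx =>
    Algebra.subset_adjoin (Finset.mem_union_right _ (Finset.mem_image_of_mem f₂ hx))
  have hft : Algebra.FiniteType K B := B.fg_iff_finiteType.mp (Subalgebra.fg_adjoin_finset _)
  have hjac : IsJacobsonRing B := isJacobsonRing_of_finiteType (A := K)
  suffices φ₁ b - φ₂ b ∈ (⊥ : Ideal B) from
    congrArg Subtype.val (sub_eq_zero.mp (Ideal.mem_bot.mp this) : φ₁ b = φ₂ b)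
  rw [← hjac.out (I := (⊥ : Ideal B)) Ideal.isPrime_bot.isRadical, Ideal.jacobson, Ideal.mem_sInf]
  rintro M ⟨-, hM⟩
  let _ := Ideal.Quotient.field M
  have hfin : Module.Finite K (B ⧸ M) := finite_of_finite_type_of_isJacobsonRing K (B ⧸ M)
  let ε : K ≃ₐ[K] (B ⧸ M) := AlgEquiv.ofBijective (Algebra.ofId K (B ⧸ M))
    IsAlgClosed.algebraMap_bijective_of_isIntegral
  let π : B →ₐ[A] K :=
    ((ε.symm : (B ⧸ M) →ₐ[K] K).comp (Ideal.Quotient.mkₐ K M)).restrictScalars A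
  have hπ := H (π.comp φ₁) (π.comp φ₂) fun z hz => congrArg π (Subtype.ext (hf z hz))
  exact Ideal.Quotient.eq.mp (ε.symm.injective hπ)

theorem exists_algHom_ker_eq {R S L : Type*} [CommRing R] [CommRing S] [Algebra R S]
    [Algebra.IsIntegral R S] [Field L] [IsAlgClosed L] [Algebra R L] (Q : Ideal S) [Q.IsPrime]
    (hQ : Q.comap (algebraMap R S) = RingHom.ker (algebraMap R L)) :
    ∃ f : S →ₐ[R] L, RingHom.ker f = Q := by
  set p := RingHom.ker (algebraMap R L)
  have : p.IsPrime := RingHom.ker_isPrime _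
  have : Q.LiesOver p := ⟨hQ.symm⟩
  let _ : Algebra (R ⧸ p) L := (RingHom.kerLift (algebraMap R L)).toAlgebra
  have : IsScalarTower R (R ⧸ p) L := IsScalarTower.of_algebraMap_eq fun _ => rfl
  have hinj : Function.Injective (algebraMap (R ⧸ p) L) := RingHom.kerLift_injective _
  have : FaithfulSMul (R ⧸ p) L := (faithfulSMul_iff_algebraMap_injective _ _).mpr hinj
  let g : (S ⧸ Q) →ₐ[R ⧸ p] L := IsAlgClosed.lift
  have hg : RingHom.ker g = ⊥ := by
    refine Ideal.eq_bot_of_comap_eq_bot (R := R ⧸ p) (eq_bot_iff.mpr fun x hx => hinj ?_)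
    rwa [Ideal.mem_comap, RingHom.mem_ker, AlgHom.commutes, ← map_zero (algebraMap (R ⧸ p) L)] at hx
  refine ⟨(g.restrictScalars R).comp (Ideal.Quotient.mkₐ R Q), ?_⟩
  ext x
  change Ideal.Quotient.mk Q x ∈ RingHom.ker g ↔ _
  rw [hg, Ideal.mem_bot, Ideal.Quotient.eq_zero_iff_mem]

theorem exists_algebraMap_mul_pow_mem_map {R S L : Type*} [CommRing R] [CommRing S] [Algebra R S]
    [Algebra.IsIntegral R S] [Field L] [IsAlgClosed L] [Algebra R L] {p : Ideal R} [p.IsPrime]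
    (hp : RingHom.ker (algebraMap R L) = p) {z : S} (hz : ∀ f : S →ₐ[R] L, f z = 0) :
    ∃ s ∉ p, ∃ n : ℕ, algebraMap R S s * z ^ n ∈ p.map (algebraMap R S) := by
  by_contra! hcon
  obtain ⟨Q, hQ, hpQ, hd⟩ := Ideal.exists_le_prime_disjoint (p.map (algebraMap R S))
    (Algebra.algebraMapSubmonoid S p.primeCompl ⊔ Submonoid.powers z) (by
      rw [Set.disjoint_left]
      intro a ha hm
      obtain ⟨_, ⟨s, hs, rfl⟩, _, ⟨n, rfl⟩, rfl⟩ := Submonoid.mem_sup.mp hm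
      exact hcon s hs n ha)
  rw [Set.disjoint_left] at hd
  have hQp : Q.comap (algebraMap R S) = p :=
    le_antisymm (fun a ha => by_contra fun hap => hd ha (Submonoid.mem_sup_left ⟨a, hap, rfl⟩))
      (Ideal.map_le_iff_le_comap.mp hpQ)
  obtain ⟨f, hf⟩ := exists_algHom_ker_eq Q (hQp.trans hp.symm)
  exact hd (hf ▸ hz f : z ∈ Q) (Submonoid.mem_sup_right (Submonoid.mem_powers z))

theorem exists_forall_apply_smul_sub_eq_zero {R S : Type*} [CommRing R] [CommRing S] [Algebra R S]
    [Algebra ℚ R] (p : Ideal R) [p.IsPrime] {b : S}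
    (H : ∀ f g : S →ₐ[R] AlgebraicClosure p.ResidueField, f b = g b) :
    ∃ s ∉ p, ∃ r : R, ∀ f : S →ₐ[R] AlgebraicClosure p.ResidueField,
      f (s • b - algebraMap R S r) = 0 := by
  set F := p.ResidueField
  set L := AlgebraicClosure F
  have hchar : CharZero F := charZero_of_injective_ringHom
    (f := (algebraMap R F).comp (algebraMap ℚ R)) (RingHom.injective _)
  rcases isEmpty_or_nonempty (S →ₐ[R] L) with hempty | ⟨⟨f⟩⟩
  · exact ⟨1, p.one_notMem, 0, fun f => hempty.elim f⟩
  have hbot : f b ∈ (⊥ : IntermediateField F L) := by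
    rw [InfiniteGalois.mem_bot_iff_fixed]
    exact fun σ => H (((σ : L →ₐ[F] L).restrictScalars R).comp f) f
  obtain ⟨x, hx⟩ := IntermediateField.mem_bot.mp hbot
  obtain ⟨r, s, hs, hrs⟩ := IsFractionRing.div_surjective (R ⧸ p) x
  obtain ⟨r, rfl⟩ := Ideal.Quotient.mk_surjective r
  obtain ⟨s, rfl⟩ := Ideal.Quotient.mk_surjective s
  have hsp : s ∉ p := fun h => nonZeroDivisors.ne_zero hs (Ideal.Quotient.eq_zero_iff_mem.mpr h)
  have hxs : algebraMap R F r = x * algebraMap R F s :=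
    (div_eq_iff fun h => hsp (Ideal.algebraMap_residueField_eq_zero.mp h)).mp hrs
  refine ⟨s, hsp, r, fun g => ?_⟩
  rw [map_sub, map_smul, AlgHom.commutes, H g f, ← hx, Algebra.smul_def,
    IsScalarTower.algebraMap_apply R F L, IsScalarTower.algebraMap_apply R F L, hxs, map_mul,
    mul_comm, sub_self]

theorem exists_smul_sub_mem_radical {R S : Type*} [CommRing R] [CommRing S] [Algebra R S]
    [Algebra ℚ R] [Algebra.IsIntegral R S] (p : Ideal R) [hp : p.IsPrime] {b : S}
    (H : ∀ f g : S →ₐ[R] AlgebraicClosure p.ResidueField, f b = g b) :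
    ∃ s ∉ p, ∃ r : R, s • b - algebraMap R S r ∈ (p.map (algebraMap R S)).radical := by
  have hker : RingHom.ker (algebraMap R (AlgebraicClosure p.ResidueField)) = p := by
    ext x
    rw [RingHom.mem_ker, IsScalarTower.algebraMap_apply R p.ResidueField, map_eq_zero,
      Ideal.algebraMap_residueField_eq_zero]
  obtain ⟨s, hs, r, hr⟩ := exists_forall_apply_smul_sub_eq_zero p H
  obtain ⟨s', hs', n, hn⟩ := exists_algebraMap_mul_pow_mem_map hker hr
  refine ⟨s' * s, fun h => (hp.mem_or_mem h).elim hs' hs, s' * r, n + 1, ?_⟩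
  rw [mul_smul, map_mul, Algebra.smul_def s', ← mul_sub]
  generalize s • b - algebraMap R S r = z at hn ⊢
  rw [show (algebraMap R S s' * z) ^ (n + 1) =
    algebraMap R S s' ^ n * z * (algebraMap R S s' * z ^ n) by ring]
  exact Ideal.mul_mem_left _ _ hn

theorem HasLinearFibers.of_adjoin_eq_top {R S : Type*} [CommRing R] [CommRing S] [Algebra R S]
    {b : S} (hb : Algebra.adjoin R {b} = ⊤)
    (H : ∀ p : Ideal R, p.IsPrime → ∃ s ∉ p, ∃ r : R,
      s • b - algebraMap R S r ∈ (p.map (algebraMap R S)).radical) : HasLinearFibers R S := by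
  intro p hp y
  set N := (p.map (algebraMap R S)).radical
  have hmul {s₁ s₂ : R} (h₁ : s₁ ∉ p) (h₂ : s₂ ∉ p) : s₁ * s₂ ∉ p :=
    fun h => (hp.mem_or_mem h).elim h₁ h₂
  have hy : y ∈ Algebra.adjoin R {b} := hb ▸ Algebra.mem_top
  induction hy using Algebra.adjoin_induction with
  | mem x hx => exact (Set.mem_singleton_iff.mp hx) ▸ H p hp
  | algebraMap r => exact ⟨1, p.one_notMem, r, by simp⟩
  | add x y _ _ hx hy =>
    obtain ⟨s₁, hs₁, r₁, h₁⟩ := hx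
    obtain ⟨s₂, hs₂, r₂, h₂⟩ := hy
    refine ⟨s₁ * s₂, hmul hs₁ hs₂, s₂ * r₁ + s₁ * r₂, ?_⟩
    convert N.add_mem (N.mul_mem_left (algebraMap R S s₂) h₁)
      (N.mul_mem_left (algebraMap R S s₁) h₂) using 1
    simp only [Algebra.smul_def, map_mul, map_add]
    ring
  | mul x y _ _ hx hy =>
    obtain ⟨s₁, hs₁, r₁, h₁⟩ := hx
    obtain ⟨s₂, hs₂, r₂, h₂⟩ := hy
    refine ⟨s₁ * s₂, hmul hs₁ hs₂, r₁ * r₂, ?_⟩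
    convert N.add_mem (N.mul_mem_left (s₂ • y) h₁)
      (N.mul_mem_left (algebraMap R S r₁) h₂) using 1
    simp only [Algebra.smul_def, map_mul]
    ring

end GeometricPoints

section GradedSubalgebra

variable {A E : Type*} [CommRing A] [CommRing E] {W : Subalgebra A A[X]}

/-- A subalgebra of `A[t]` is graded by the `t`-degree if it contains the homogeneous components of
its elements. -/
def IsGradedSubalgebra (W : Subalgebra A A[X]) : Prop :=
  ∀ x ∈ W, ∀ n, Polynomial.monomial n (x.coeff n) ∈ W

/-- The irrelevant ideal `W₊` of a graded subring `W ⊆ A[t]`: the elements with zero constant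
term. -/
noncomputable def irrelevantIdeal (W : Subalgebra A A[X]) : Ideal W :=
  RingHom.ker (Polynomial.constantCoeff.comp (W.val : W →+* A[X]))

theorem mem_irrelevantIdeal {x : W} : x ∈ irrelevantIdeal W ↔ (x : A[X]).coeff 0 = 0 :=
  Iff.rfl

namespace IsGradedSubalgebra

/-- The homogeneous component `xₙ` of degree `n`, as an element of the graded subring. -/
noncomputable def component (hW : IsGradedSubalgebra W) (n : ℕ) (x : W) : W :=
  ⟨_, hW x x.2 n⟩

theorem coe_component (hW : IsGradedSubalgebra W) (n : ℕ) (x : W) :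
    (hW.component n x : A[X]) = Polynomial.monomial n ((x : A[X]).coeff n) :=
  rfl

theorem component_of_coe_eq (hW : IsGradedSubalgebra W) {x : W} {n : ℕ} {a : A}
    (hx : (x : A[X]) = Polynomial.monomial n a) (m : ℕ) :
    hW.component m x = if n = m then x else 0 := by
  apply Subtype.ext
  rw [coe_component, hx, Polynomial.coeff_monomial]
  split_ifs with h
  · rw [hx, h]
  · rw [map_zero, ZeroMemClass.coe_zero]

theorem component_sum (hW : IsGradedSubalgebra W) {ι : Type*} (s : Finset ι) (f : ι → W) (n : ℕ) :
    hW.component n (∑ i ∈ s, f i) = ∑ i ∈ s, hW.component n (f i) := by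
  apply Subtype.ext
  simp only [coe_component, AddSubmonoidClass.coe_finsetSum, Polynomial.finsetSum_coeff, map_sum]

theorem component_mul (hW : IsGradedSubalgebra W) (n : ℕ) (x y : W) : hW.component n (x * y) =
    ∑ i ∈ Finset.HasAntidiagonal.antidiagonal n, hW.component i.1 x * hW.component i.2 y := by
  apply Subtype.ext
  rw [coe_component, MulMemClass.coe_mul, Polynomial.coeff_mul, map_sum,
    AddSubmonoidClass.coe_finsetSum]
  refine Finset.sum_congr rfl fun ⟨i, j⟩ hij => ?_
  obtain rfl : i + j = n := by simpa using hij
  rw [MulMemClass.coe_mul, coe_component, coe_component, Polynomial.monomial_mul_monomial]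

theorem component_mul_of_coe_eq (hW : IsGradedSubalgebra W) {y : W} {i : ℕ} {a : A}
    (hy : (y : A[X]) = Polynomial.monomial i a) (x : W) (n : ℕ) :
    hW.component n (x * y) = if i ≤ n then hW.component (n - i) x * y else 0 := by
  apply Subtype.ext
  rw [coe_component, MulMemClass.coe_mul, hy, ← C_mul_X_pow_eq_monomial (n := i), ← mul_assoc,
    coeff_mul_X_pow', coeff_mul_C]
  split_ifs with h
  · rw [MulMemClass.coe_mul, coe_component, hy, Polynomial.monomial_mul_monomial,
      Nat.sub_add_cancel h]
  · rw [map_zero, ZeroMemClass.coe_zero]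

theorem component_mem_irrelevantIdeal (hW : IsGradedSubalgebra W) {x : W}
    (hx : x ∈ irrelevantIdeal W) (n : ℕ) : hW.component n x ∈ irrelevantIdeal W := by
  rw [mem_irrelevantIdeal] at hx ⊢
  rw [coe_component, Polynomial.coeff_monomial]
  split_ifs with h
  · rw [h, hx]
  · rfl

theorem component_zero_eq_zero (hW : IsGradedSubalgebra W) {x : W}
    (hx : x ∈ irrelevantIdeal W) : hW.component 0 x = 0 :=
  Subtype.ext (by rw [coe_component, mem_irrelevantIdeal.mp hx, map_zero, ZeroMemClass.coe_zero])

/-- The homomorphism `x ↦ ∑ φ(xₙ) Xⁿ`, where `xₙ` are the homogeneous components of `x`. -/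
noncomputable def gradedHom (hW : IsGradedSubalgebra W) (φ : W →+* E) : W →+* PowerSeries E where
  toFun x := PowerSeries.mk fun n => φ (hW.component n x)
  map_one' := by
    ext n
    rw [PowerSeries.coeff_mk, hW.component_of_coe_eq (n := 0) (a := 1) rfl, PowerSeries.coeff_one,
      apply_ite φ, map_one, map_zero]
    simp only [eq_comm]
  map_zero' := by
    ext n
    rw [PowerSeries.coeff_mk, ← Finset.sum_empty (f := fun _ : ℕ => (0 : W)), component_sum,
      Finset.sum_empty, map_zero, map_zero]
  map_add' x y := by
    ext n
    have hadd : hW.component n (x + y) = hW.component n x + hW.component n y :=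
      Subtype.ext (by simp [coe_component])
    simp only [PowerSeries.coeff_mk, hadd, map_add]
  map_mul' x y := by
    ext n
    simp only [PowerSeries.coeff_mk, component_mul, map_sum, map_mul, PowerSeries.coeff_mul]

theorem mem_ker_gradedHom (hW : IsGradedSubalgebra W) (φ : W →+* E) (x : W) :
    x ∈ RingHom.ker (hW.gradedHom φ) ↔ ∀ n, φ (hW.component n x) = 0 := by
  rw [RingHom.mem_ker, PowerSeries.ext_iff]
  simp [gradedHom]

theorem mem_ker_gradedHom_of_coe_eq (hW : IsGradedSubalgebra W) (φ : W →+* E) {x : W} {n : ℕ}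
    {a : A} (hx : (x : A[X]) = Polynomial.monomial n a) :
    x ∈ RingHom.ker (hW.gradedHom φ) ↔ φ x = 0 := by
  simp only [mem_ker_gradedHom, hW.component_of_coe_eq hx, apply_ite φ, map_zero, ite_eq_right_iff]
  exact forall_eq'

theorem isHomogIdealIn_ker_gradedHom (hW : IsGradedSubalgebra W) (φ : W →+* E) :
    IsHomogIdealIn W (RingHom.ker (hW.gradedHom φ)) := fun x hx n _ =>
  (hW.mem_ker_gradedHom_of_coe_eq φ rfl).mpr ((hW.mem_ker_gradedHom φ x).mp hx n)

/-- The prime ideal generated by the homogeneous elements of the kernel of `φ : W → E`, encoded as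
the kernel of `gradedHom φ`: a point of `Proj W` if it does not contain the irrelevant ideal. -/
noncomputable def toProj [IsDomain E] (hW : IsGradedSubalgebra W) (φ : W →+* E)
    (hφ : ∃ x ∈ irrelevantIdeal W, x ∉ RingHom.ker (hW.gradedHom φ)) : ProjOf W :=
  ⟨RingHom.ker (hW.gradedHom φ), RingHom.ker_isPrime _, hW.isHomogIdealIn_ker_gradedHom φ, hφ⟩

end IsGradedSubalgebra

end GradedSubalgebra

theorem exists_aeval_eq_of_mem_map {R S : Type*} [CommRing R] [CommRing S] [Algebra R S] {b : S}
    (hb : Algebra.adjoin R {b} = ⊤) {J : Ideal R} {y : S} (hy : y ∈ J.map (algebraMap R S)) :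
    ∃ F : R[X], (∀ i, F.coeff i ∈ J) ∧ aeval b F = y := by
  have hsurj : Function.Surjective (aeval (R := R) b) := by
    rw [← AlgHom.range_eq_top, ← Algebra.adjoin_singleton_eq_range_aeval, hb]
  have hcomp : (aeval (R := R) b).toRingHom.comp Polynomial.C = algebraMap R S :=
    (aeval (R := R) b).comp_algebraMap
  rw [← hcomp, ← Ideal.map_map] at hy
  obtain ⟨F, hF, hFy⟩ := (Ideal.mem_map_iff_of_surjective _ hsurj).mp hy
  exact ⟨F, Ideal.mem_map_C_iff.mp hF, hFy⟩

theorem isIntegral_of_pow_eq_sum {R S : Type*} [CommRing R] [CommRing S] [Algebra R S] {x : S}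
    {N : ℕ} {c : ℕ → R} (hx : x ^ N = ∑ i ∈ Finset.range N, c i • x ^ i) : IsIntegral R x := by
  refine ⟨X ^ N - ∑ i : Fin N, Polynomial.C (c i) * X ^ (i : ℕ),
    monic_X_pow_sub (degree_sum_fin_lt fun i : Fin N => c i), ?_⟩
  simp [← aeval_def, hx, Finset.sum_range, Algebra.smul_def]

/-- The algebra `A[It, ht]`. -/
noncomputable abbrev reesAdjoin {A : Type*} [CommRing A] (I : Ideal A) (h : A) :
    Subalgebra A A[X] :=
  reesAlgebra I ⊔ Algebra.adjoin A {Polynomial.monomial 1 h}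

namespace reesAdjoin

section Generators

variable {A : Type*} [CommRing A] (I : Ideal A) (h : A)

noncomputable instance : Algebra (reesAlgebra I) (reesAdjoin I h) :=
  (Subalgebra.inclusion le_sup_left).toAlgebra

instance : IsScalarTower A (reesAlgebra I) (reesAdjoin I h) :=
  IsScalarTower.of_algebraMap_eq fun _ => rfl

/-- The element `ht` of `A[It, ht]`. -/
noncomputable def gen : reesAdjoin I h :=
  ⟨Polynomial.monomial 1 h, le_sup_right (a := reesAlgebra I)
    (Algebra.subset_adjoin (Set.mem_singleton _))⟩

theorem coe_gen : (gen I h : A[X]) = Polynomial.monomial 1 h := rfl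

theorem coe_gen_pow (n : ℕ) : ((gen I h ^ n : reesAdjoin I h) : A[X]) =
    Polynomial.monomial n (h ^ n) := by
  rw [SubmonoidClass.coe_pow, coe_gen, Polynomial.monomial_pow, one_mul]

theorem gen_mem_irrelevantIdeal : gen I h ∈ irrelevantIdeal (reesAdjoin I h) :=
  mem_irrelevantIdeal.mpr (Polynomial.coeff_monomial_of_ne h one_ne_zero.symm)

theorem coe_algebraMap (x : reesAlgebra I) :
    (algebraMap (reesAlgebra I) (reesAdjoin I h) x : A[X]) = x := rfl

/-- The element `at` of `A[It]`, for `a ∈ I`. -/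
noncomputable def degreeOne {I : Ideal A} (a : I) : reesAlgebra I :=
  ⟨Polynomial.monomial 1 (a : A), reesAlgebra.monomial_mem.mpr (by rw [pow_one]; exact a.2)⟩

theorem coe_degreeOne {I : Ideal A} (a : I) :
    (degreeOne a : A[X]) = Polynomial.monomial 1 (a : A) := rfl

theorem eq_reesAlgebra : reesAdjoin I h = reesAlgebra (I ⊔ Ideal.span {h}) := by
  apply le_antisymm
  · refine sup_le (fun x hx => ?_) (Algebra.adjoin_le ?_)
    · rw [mem_reesAlgebra_iff] at hx ⊢
      exact fun n => Ideal.pow_right_mono le_sup_left n (hx n)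
    · rw [Set.singleton_subset_iff]
      refine reesAlgebra.monomial_mem.mpr ?_
      rw [pow_one]
      exact Ideal.mem_sup_right (Ideal.mem_span_singleton_self h)
  · rw [← adjoin_monomial_eq_reesAlgebra]
    refine Algebra.adjoin_le ?_
    rintro _ ⟨x, hx, rfl⟩
    obtain ⟨i, hi, y, hy, rfl⟩ := Submodule.mem_sup.mp hx
    obtain ⟨a, rfl⟩ := Ideal.mem_span_singleton'.mp hy
    rw [map_add, ← smul_eq_mul, map_smul]
    refine Subalgebra.add_mem _ (le_sup_left (a := reesAlgebra I) ?_)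
      (Subalgebra.smul_mem _ (gen I h).2 a)
    exact reesAlgebra.monomial_mem.mpr (by rwa [pow_one])

theorem isGradedSubalgebra_reesAlgebra : IsGradedSubalgebra (reesAlgebra I) := fun _ hx n =>
  reesAlgebra.monomial_mem.mpr ((mem_reesAlgebra_iff _ _).mp hx n)

theorem isGradedSubalgebra : IsGradedSubalgebra (reesAdjoin I h) :=
  eq_reesAlgebra I h ▸ isGradedSubalgebra_reesAlgebra _

theorem component_algebraMap (n : ℕ) (x : reesAlgebra I) :
    (isGradedSubalgebra I h).component n (algebraMap (reesAlgebra I) (reesAdjoin I h) x) =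
      algebraMap (reesAlgebra I) (reesAdjoin I h)
        ((isGradedSubalgebra_reesAlgebra I).component n x) :=
  rfl

instance [IsNoetherianRing A] : Algebra.FiniteType A (reesAdjoin I h) := by
  rw [eq_reesAlgebra]
  infer_instance

theorem adjoin_gen : Algebra.adjoin (reesAlgebra I) {gen I h} = ⊤ := by
  have hle : reesAdjoin I h ≤
      ((Algebra.adjoin (reesAlgebra I) {gen I h}).restrictScalars A).map (reesAdjoin I h).val := by
    refine sup_le (fun y hy => ?_) (Algebra.adjoin_le (Set.singleton_subset_iff.mpr ?_))
    · exact ⟨algebraMap (reesAlgebra I) (reesAdjoin I h) ⟨y, hy⟩,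
        (Algebra.adjoin (reesAlgebra I) {gen I h}).algebraMap_mem _, rfl⟩
    · exact ⟨gen I h, Algebra.self_mem_adjoin_singleton _ _, rfl⟩
  refine eq_top_iff.mpr fun x _ => ?_
  obtain ⟨y, hy, hyx⟩ := hle x.2
  exact Subtype.ext hyx ▸ hy

theorem irrelevantIdeal_le_span_degreeOne :
    irrelevantIdeal (reesAlgebra I) ≤ Ideal.span (Set.range (degreeOne (I := I))) := by
  set J := Ideal.span (Set.range (degreeOne (I := I)))
  have hadjoin := adjoin_monomial_eq_reesAlgebra I
  suffices ∀ x (hx : x ∈ reesAlgebra I),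
      (⟨x, hx⟩ : reesAlgebra I) - algebraMap A (reesAlgebra I) (x.coeff 0) ∈ J by
    intro x hx
    simpa [mem_irrelevantIdeal.mp hx] using this x x.2
  intro x hx
  have hx' := hadjoin.ge hx
  induction hx' using Algebra.adjoin_induction with
  | mem x hx' =>
    obtain ⟨a, ha, rfl⟩ := hx'
    rw [Polynomial.coeff_monomial_of_ne a one_ne_zero.symm, map_zero, sub_zero]
    exact Ideal.subset_span ⟨⟨a, ha⟩, rfl⟩
  | algebraMap a =>
    convert J.zero_mem
    rw [sub_eq_zero]
    exact Subtype.ext (by simp)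
  | add x y hxA hyA ihx ihy =>
    convert J.add_mem (ihx (hadjoin.le hxA)) (ihy (hadjoin.le hyA)) using 1
    rw [coeff_add, map_add, sub_add_sub_comm]
    rfl
  | mul x y hxA hyA ihx ihy =>
    convert J.add_mem (J.mul_mem_left ⟨x, hadjoin.le hxA⟩ (ihy (hadjoin.le hyA)))
      (J.mul_mem_left (algebraMap A _ (y.coeff 0)) (ihx (hadjoin.le hxA))) using 1
    rw [mul_coeff_zero, map_mul, mul_sub, mul_sub, mul_comm (algebraMap A (reesAlgebra I) _) ⟨x, _⟩,
      sub_add_sub_cancel, mul_comm (algebraMap A (reesAlgebra I) (y.coeff 0))]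
    rfl

end Generators

section Integrality

variable {A : Type*} [CommRing A] {I : Ideal A} {h : A}

theorem exists_gen_pow_mem_map_irrelevantIdeal
    (hrel : ∀ q : ProjOf (reesAdjoin I h), ∃ x ∈ irrelevantIdeal (reesAlgebra I),
      algebraMap (reesAlgebra I) (reesAdjoin I h) x ∉ q.val) :
    ∃ N : ℕ, gen I h ^ N ∈
      (irrelevantIdeal (reesAlgebra I)).map (algebraMap (reesAlgebra I) (reesAdjoin I h)) := by
  have hS := isGradedSubalgebra I h
  set J := (irrelevantIdeal (reesAlgebra I)).map (algebraMap (reesAlgebra I) (reesAdjoin I h))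
  change gen I h ∈ J.radical
  rw [Ideal.radical_eq_sInf, Ideal.mem_sInf]
  rintro Q ⟨hJQ, hQ⟩
  by_contra hgenQ
  have hgen : gen I h ∉ RingHom.ker (hS.gradedHom (E := reesAdjoin I h ⧸ Q)
      (Ideal.Quotient.mk Q)) := by
    rwa [hS.mem_ker_gradedHom_of_coe_eq _ (coe_gen I h), Ideal.Quotient.eq_zero_iff_mem]
  obtain ⟨x, hx, hxq⟩ :=
    hrel (hS.toProj (E := reesAdjoin I h ⧸ Q) (Ideal.Quotient.mk Q)
      ⟨gen I h, gen_mem_irrelevantIdeal I h, hgen⟩)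
  refine hxq ((hS.mem_ker_gradedHom _ _).mpr fun n => Ideal.Quotient.eq_zero_iff_mem.mpr (hJQ ?_))
  exact Ideal.mem_map_of_mem _
    ((isGradedSubalgebra_reesAlgebra I).component_mem_irrelevantIdeal hx n)

theorem gen_pow_eq_sum_component_smul {N : ℕ} {F : (reesAlgebra I)[X]}
    (hF : ∀ i, F.coeff i ∈ irrelevantIdeal (reesAlgebra I))
    (hFN : aeval (gen I h) F = gen I h ^ N) :
    gen I h ^ N = ∑ i ∈ Finset.range N,
      (isGradedSubalgebra_reesAlgebra I).component (N - i) (F.coeff i) • gen I h ^ i := by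
  have hS := isGradedSubalgebra I h
  have hR := isGradedSubalgebra_reesAlgebra I
  have hterm (i : ℕ) : hS.component N (F.coeff i • gen I h ^ i) =
      if i ≤ N then hR.component (N - i) (F.coeff i) • gen I h ^ i else 0 := by
    rw [Algebra.smul_def, hS.component_mul_of_coe_eq (coe_gen_pow I h i), Algebra.smul_def]
    rfl
  have hsub : Finset.range N ⊆ Finset.range (N + F.natDegree + 1) :=
    Finset.range_subset_range.mpr (by omega)
  calc gen I h ^ N = hS.component N (aeval (gen I h) F) := by
        rw [hFN, hS.component_of_coe_eq (coe_gen_pow I h N), if_pos rfl]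
    _ = ∑ i ∈ Finset.range (N + F.natDegree + 1),
          if i ≤ N then hR.component (N - i) (F.coeff i) • gen I h ^ i else 0 := by
        rw [aeval_eq_sum_range' (by omega : F.natDegree < N + F.natDegree + 1), hS.component_sum]
        exact Finset.sum_congr rfl fun i _ => hterm i
    _ = ∑ i ∈ Finset.range N, if i ≤ N then hR.component (N - i) (F.coeff i) • gen I h ^ i
          else 0 := by
        refine (Finset.sum_subset hsub fun i _ hi => ?_).symm
        rcases (not_lt.mp (Finset.mem_range.not.mp hi)).eq_or_lt with rfl | hlt
        · rw [if_pos le_rfl, Nat.sub_self, hR.component_zero_eq_zero (hF N), zero_smul]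
        · exact if_neg hlt.not_ge
    _ = _ := Finset.sum_congr rfl fun i hi => if_pos (Finset.mem_range.mp hi).le

theorem finite_of_gen_pow_mem {N : ℕ} (hN : gen I h ^ N ∈
      (irrelevantIdeal (reesAlgebra I)).map (algebraMap (reesAlgebra I) (reesAdjoin I h))) :
    Module.Finite (reesAlgebra I) (reesAdjoin I h) := by
  obtain ⟨F, hF, hFN⟩ := exists_aeval_eq_of_mem_map (adjoin_gen I h) hN
  have hint : IsIntegral (reesAlgebra I) (gen I h) :=
    isIntegral_of_pow_eq_sum (gen_pow_eq_sum_component_smul hF hFN)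
  refine ⟨?_⟩
  rw [← Algebra.top_toSubmodule, ← adjoin_gen]
  exact hint.fg_adjoin_singleton

end Integrality

section Fibers

variable {A : Type*} [CommRing A] {I : Ideal A} {h : A}

theorem apply_gen_eq_zero_of_apply_degreeOne_eq_zero {K : Type*} [Field K] {N : ℕ}
    (hN : gen I h ^ N ∈
      (irrelevantIdeal (reesAlgebra I)).map (algebraMap (reesAlgebra I) (reesAdjoin I h)))
    (ψ : reesAdjoin I h →+* K)
    (hψ : ∀ a : I, ψ (algebraMap (reesAlgebra I) (reesAdjoin I h) (degreeOne a)) = 0) :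
    ψ (gen I h) = 0 := by
  have hle : irrelevantIdeal (reesAlgebra I) ≤
      (RingHom.ker ψ).comap (algebraMap (reesAlgebra I) (reesAdjoin I h)) :=
    (irrelevantIdeal_le_span_degreeOne I).trans
      (Ideal.span_le.mpr (Set.range_subset_iff.mpr hψ))
  exact eq_zero_of_pow_eq_zero ((map_pow ψ _ N).symm.trans (Ideal.map_le_iff_le_comap.mpr hle hN))

theorem ker_gradedHom_eq_of_injective {K : Type*} [Field K]
    (hinj : Function.Injective fun q : ProjOf (reesAdjoin I h) =>
      q.val.comap (algebraMap (reesAlgebra I) (reesAdjoin I h)))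
    {ψ₁ ψ₂ : reesAdjoin I h →+* K}
    (hψ : ∀ x, ψ₁ (algebraMap (reesAlgebra I) (reesAdjoin I h) x) =
      ψ₂ (algebraMap (reesAlgebra I) (reesAdjoin I h) x))
    {a : I} (ha : ψ₁ (algebraMap (reesAlgebra I) (reesAdjoin I h) (degreeOne a)) ≠ 0) :
    RingHom.ker ((isGradedSubalgebra I h).gradedHom ψ₁) =
      RingHom.ker ((isGradedSubalgebra I h).gradedHom ψ₂) := by
  have hS := isGradedSubalgebra I h
  set x := algebraMap (reesAlgebra I) (reesAdjoin I h) (degreeOne a)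
  have hx : (x : A[X]) = Polynomial.monomial 1 (a : A) := rfl
  have hx0 : x ∈ irrelevantIdeal (reesAdjoin I h) :=
    mem_irrelevantIdeal.mpr (Polynomial.coeff_monomial_of_ne (a : A) one_ne_zero.symm)
  have hmem (ψ : reesAdjoin I h →+* K) (hψx : ψ x ≠ 0) : x ∉ RingHom.ker (hS.gradedHom ψ) := by
    rwa [hS.mem_ker_gradedHom_of_coe_eq _ hx]
  have hcomap : (RingHom.ker (hS.gradedHom ψ₁)).comap (algebraMap (reesAlgebra I) _) =
      (RingHom.ker (hS.gradedHom ψ₂)).comap (algebraMap (reesAlgebra I) _) := by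
    ext y
    simp only [Ideal.mem_comap, hS.mem_ker_gradedHom, component_algebraMap, hψ]
  exact congrArg Subtype.val (@hinj (hS.toProj ψ₁ ⟨x, hx0, hmem ψ₁ ha⟩)
    (hS.toProj ψ₂ ⟨x, hx0, hmem ψ₂ (hψ _ ▸ ha)⟩) hcomap)

theorem apply_gen_eq_of_surjective {K : Type*} [Field K] [Algebra A K]
    (hK : Function.Surjective (algebraMap A K)) {N : ℕ}
    (hN : gen I h ^ N ∈
      (irrelevantIdeal (reesAlgebra I)).map (algebraMap (reesAlgebra I) (reesAdjoin I h)))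
    (hinj : Function.Injective fun q : ProjOf (reesAdjoin I h) =>
      q.val.comap (algebraMap (reesAlgebra I) (reesAdjoin I h)))
    (ψ₁ ψ₂ : reesAdjoin I h →ₐ[A] K)
    (hψ : ∀ x, ψ₁ (algebraMap (reesAlgebra I) (reesAdjoin I h) x) =
      ψ₂ (algebraMap (reesAlgebra I) (reesAdjoin I h) x)) :
    ψ₁ (gen I h) = ψ₂ (gen I h) := by
  by_cases hdeg : ∀ a : I, ψ₁ (algebraMap (reesAlgebra I) (reesAdjoin I h) (degreeOne a)) = 0
  · have h₁ := apply_gen_eq_zero_of_apply_degreeOne_eq_zero hN (ψ₁ : reesAdjoin I h →+* K) hdeg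
    have h₂ := apply_gen_eq_zero_of_apply_degreeOne_eq_zero hN (ψ₂ : reesAdjoin I h →+* K)
      fun a => (hψ _).symm.trans (hdeg a)
    exact h₁.trans h₂.symm
  push Not at hdeg
  obtain ⟨a, ha⟩ := hdeg
  have hS := isGradedSubalgebra I h
  set x := algebraMap (reesAlgebra I) (reesAdjoin I h) (degreeOne a) with hx
  obtain ⟨c, hc⟩ := hK (ψ₁ (gen I h) / ψ₁ x)
  have hz : ((gen I h - c • x : reesAdjoin I h) : A[X]) =
      Polynomial.monomial 1 (h - c * a) := by
    rw [AddSubgroupClass.coe_sub, SetLike.val_smul, hx, coe_algebraMap, coe_degreeOne, coe_gen,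
      map_sub, Polynomial.smul_monomial, smul_eq_mul]
  have happly (ψ : reesAdjoin I h →ₐ[A] K) (hψx : ψ x = ψ₁ x) :
      ψ (gen I h - c • x) = ψ (gen I h) - ψ₁ (gen I h) := by
    rw [map_sub, map_smul, Algebra.smul_def, hc, hψx, div_mul_cancel₀ _ ha]
  have hker₁ : gen I h - c • x ∈ RingHom.ker (hS.gradedHom (ψ₁ : reesAdjoin I h →+* K)) :=
    (hS.mem_ker_gradedHom_of_coe_eq _ hz).mpr ((happly ψ₁ rfl).trans (sub_self _))
  have hker₂ := (ker_gradedHom_eq_of_injective hinj hψ ha).le hker₁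
  have hψ₂ : ψ₂ (gen I h - c • x) = 0 := (hS.mem_ker_gradedHom_of_coe_eq _ hz).mp hker₂
  rw [happly ψ₂ (hψ _).symm, sub_eq_zero] at hψ₂
  exact hψ₂.symm

theorem apply_gen_eq_of_maximalIdeal_le_ker [IsLocalRing A] [IsNoetherianRing A]
    [IsAlgClosed (IsLocalRing.ResidueField A)] {N : ℕ}
    (hN : gen I h ^ N ∈
      (irrelevantIdeal (reesAlgebra I)).map (algebraMap (reesAlgebra I) (reesAdjoin I h)))
    (hinj : Function.Injective fun q : ProjOf (reesAdjoin I h) =>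
      q.val.comap (algebraMap (reesAlgebra I) (reesAdjoin I h)))
    {L : Type*} [Field L] [Algebra (reesAlgebra I) L]
    (hm : IsLocalRing.maximalIdeal A ≤
      RingHom.ker ((algebraMap (reesAlgebra I) L).comp (algebraMap A (reesAlgebra I))))
    (f g : reesAdjoin I h →ₐ[reesAlgebra I] L) : f (gen I h) = g (gen I h) := by
  let _ : Algebra A L := ((algebraMap (reesAlgebra I) L).comp (algebraMap A _)).toAlgebra
  have : IsScalarTower A (reesAlgebra I) L := IsScalarTower.of_algebraMap_eq fun _ => rfl
  let _ : Algebra (IsLocalRing.ResidueField A) L :=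
    (Ideal.Quotient.lift (IsLocalRing.maximalIdeal A) (algebraMap A L) hm).toAlgebra
  have : IsScalarTower A (IsLocalRing.ResidueField A) L :=
    IsScalarTower.of_algebraMap_eq fun _ => rfl
  refine apply_eq_of_forall_algHom_of_isAlgClosed (K := IsLocalRing.ResidueField A)
    (Set.range (algebraMap (reesAlgebra I) (reesAdjoin I h))) (gen I h) (fun g₁ g₂ hg => ?_)
    (f.restrictScalars A) (g.restrictScalars A) ?_
  · exact apply_gen_eq_of_surjective IsLocalRing.residue_surjective hN hinj g₁ g₂
      fun x => hg _ ⟨x, rfl⟩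
  · rintro _ ⟨x, rfl⟩
    exact (f.commutes x).trans (g.commutes x).symm

theorem smul_gen_eq_algebraMap (a : I) : algebraMap A (reesAlgebra I) a • gen I h =
    algebraMap (reesAlgebra I) (reesAdjoin I h) (h • degreeOne a) := by
  apply Subtype.ext
  rw [algebraMap_smul, SetLike.val_smul, coe_gen, coe_algebraMap, SetLike.val_smul, coe_degreeOne,
    Polynomial.smul_monomial, Polynomial.smul_monomial, smul_eq_mul, smul_eq_mul, mul_comm]

theorem hasLinearFibers [IsLocalRing A] [IsNoetherianRing A] [Algebra ℚ A]
    [IsAlgClosed (IsLocalRing.ResidueField A)] (hI : IsLocalRing.maximalIdeal A ≤ I.radical)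
    [Algebra.IsIntegral (reesAlgebra I) (reesAdjoin I h)] {N : ℕ}
    (hN : gen I h ^ N ∈
      (irrelevantIdeal (reesAlgebra I)).map (algebraMap (reesAlgebra I) (reesAdjoin I h)))
    (hinj : Function.Injective fun q : ProjOf (reesAdjoin I h) =>
      q.val.comap (algebraMap (reesAlgebra I) (reesAdjoin I h))) :
    HasLinearFibers (reesAlgebra I) (reesAdjoin I h) := by
  refine HasLinearFibers.of_adjoin_eq_top (adjoin_gen I h) fun p hp => ?_
  by_cases hIp : I ≤ p.comap (algebraMap A (reesAlgebra I))
  · refine exists_smul_sub_mem_radical p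
      (apply_gen_eq_of_maximalIdeal_le_ker hN hinj fun x hx => ?_)
    rw [RingHom.mem_ker, RingHom.comp_apply, IsScalarTower.algebraMap_apply _ p.ResidueField,
      map_eq_zero, Ideal.algebraMap_residueField_eq_zero]
    exact (hp.comap _).radical_le_iff.mpr hIp (hI hx)
  · obtain ⟨a, ha, hap⟩ := SetLike.not_le_iff_exists.mp hIp
    refine ⟨_, hap, h • degreeOne ⟨a, ha⟩, ?_⟩
    rw [smul_gen_eq_algebraMap ⟨a, ha⟩, sub_self]
    exact Ideal.zero_mem _

end Fibers

open PowerSeries in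
theorem wSubIdeal_of_hasLinearFibers {A : Type*} [CommRing A] [Algebra ℚ A] [IsNoetherianRing A]
    {I : Ideal A} {h : A} [Module.Finite (reesAlgebra I) (reesAdjoin I h)]
    (H : HasLinearFibers (reesAlgebra I) (reesAdjoin I h)) : WSubIdeal I h := by
  obtain ⟨P, hP, hPexp⟩ := H.exists_coeff_mul_exp_mem_bot (-gen I h)
  set ι : reesAdjoin I h →+* A[X] := (reesAdjoin I h).val.toRingHom
  set F := PowerSeries.map ι ((P : (reesAdjoin I h)⟦X⟧) * rescale (-gen I h) (exp _)) with hF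
  have hFR (n : ℕ) : PowerSeries.coeff n F ∈ reesAlgebra I := by
    obtain ⟨x, hx⟩ := Algebra.mem_bot.mp (hPexp n)
    rw [hF, PowerSeries.coeff_map, ← hx]
    exact x.2
  have hFexp : F * rescale (Polynomial.monomial 1 h) (exp A[X]) =
      PowerSeries.map ι (P : (reesAdjoin I h)⟦X⟧) := by
    rw [hF, ← coe_gen I h, show (gen I h : A[X]) = ι (gen I h) from rfl, ← map_rescale_exp,
      ← map_mul, mul_assoc, mul_comm (rescale _ _), rescale_exp_mul_rescale_exp_neg, mul_one]
  refine wSubIdeal_of_coeff_mul_rescale_exp_eq_zero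
    (a := PowerSeries.mk fun n => (PowerSeries.coeff n F).coeff n) (q := P.natDegree)
    (fun n => ?_) ?_ fun n hn => ?_
  · rw [coeff_mk]
    exact (mem_reesAlgebra_iff I _).mp (hFR n) n
  · rw [← coeff_zero_eq_constantCoeff_apply, coeff_mk, hF, PowerSeries.coeff_map,
      coeff_zero_eq_constantCoeff_apply, map_mul, constantCoeff_rescale_exp, mul_one,
      Polynomial.constantCoeff_coe, hP, map_one, coeff_one_zero]
  · rw [← coeff_coeff_mul_rescale_monomial_exp, hFexp, PowerSeries.coeff_map, Polynomial.coeff_coe,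
      coeff_eq_zero_of_natDegree_lt hn, map_zero, Polynomial.coeff_zero]

end reesAdjoin

theorem isAlgClosed_of_surjective {k K : Type*} [Field k] [IsAlgClosed k] [Field K] (f : k →+* K)
    (hf : Function.Surjective f) : IsAlgClosed K := by
  refine ⟨fun P => ?_⟩
  obtain ⟨Q, rfl⟩ := Polynomial.map_surjective f hf P
  exact (IsAlgClosed.splits Q).map f

theorem weakSubintegral_of_proj_homeomorph_general {A : Type*} [CommRing A] [IsNoetherianRing A]
    [IsLocalRing A] [Algebra ℚ A] [IsAlgClosed (IsLocalRing.ResidueField A)] {I : Ideal A}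
    (hI : IsLocalRing.maximalIdeal A ≤ I.radical) {h : A}
    {c : ProjOf (reesAdjoin I h) → ProjOf (reesAlgebra I)} (hc : Function.Injective c)
    (hcomap : ∀ q, (c q).val =
      q.val.comap (Subalgebra.inclusion (le_sup_left : reesAlgebra I ≤ reesAdjoin I h))) :
    WSubIdeal I h := by
  have hinj : Function.Injective fun q : ProjOf (reesAdjoin I h) =>
      q.val.comap (algebraMap (reesAlgebra I) (reesAdjoin I h)) := fun q₁ q₂ hq =>
    hc (Subtype.ext ((hcomap q₁).trans (hq.trans (hcomap q₂).symm)))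
  obtain ⟨N, hN⟩ := reesAdjoin.exists_gen_pow_mem_map_irrelevantIdeal fun q => by
    obtain ⟨x, hx, hxq⟩ := (c q).2.2.2
    rw [hcomap] at hxq
    exact ⟨x, hx, hxq⟩
  have := reesAdjoin.finite_of_gen_pow_mem hN
  exact reesAdjoin.wSubIdeal_of_hasLinearFibers (reesAdjoin.hasLinearFibers hI hN hinj)

/-- Lemma 3.9: let `(A,m,k)` be the local ring of an algebraic variety
over an algebraically closed field `k` of characteristic 0, `I` an `m`-primary ideal,
`h ∈ A`, `R = A[It]` and `S = A[It, ht] ⊆ A[t]`.  If the induced map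
`Proj S → Proj R`, `q ↦ q ∩ R`, is a homeomorphism for the Zariski topologies
(hypotheses `e`, `he`), then `h ∈ *I`. -/
theorem weakSubintegral_of_proj_homeomorph {k A : Type*} [Field k] [IsAlgClosed k]
    [CharZero k] [CommRing A] [IsReduced A] [IsNoetherianRing A] [IsLocalRing A]
    [Algebra k A] [Algebra.EssFiniteType k A]
    (hres : ∀ x : A, ∃ c : k, x - algebraMap k A c ∈ IsLocalRing.maximalIdeal A)
    (I : Ideal A) (hIm : I.radical = IsLocalRing.maximalIdeal A) (h : A)
    (e : @Homeomorph (ProjOf (reesAlgebra I ⊔ Algebra.adjoin A {Polynomial.monomial 1 h}))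
      (ProjOf (reesAlgebra I))
      (projTopology (reesAlgebra I ⊔ Algebra.adjoin A {Polynomial.monomial 1 h}))
      (projTopology (reesAlgebra I)))
    (he : ∀ q : ProjOf (reesAlgebra I ⊔ Algebra.adjoin A {Polynomial.monomial 1 h}),
      (e q).val = Ideal.comap (Subalgebra.inclusion
        (le_sup_left :
          reesAlgebra I ≤ reesAlgebra I ⊔ Algebra.adjoin A {Polynomial.monomial 1 h}))
        q.val) :
    WSubIdeal I h := by
  let _ : Algebra ℚ A := ((algebraMap k A).comp (algebraMap ℚ k)).toAlgebra
  have hclosed : IsAlgClosed (IsLocalRing.ResidueField A) := by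
    refine isAlgClosed_of_surjective ((IsLocalRing.residue A).comp (algebraMap k A)) fun y => ?_
    obtain ⟨x, rfl⟩ := IsLocalRing.residue_surjective y
    obtain ⟨c, hc⟩ := hres x
    exact ⟨c, (Ideal.Quotient.eq.mpr hc).symm⟩
  exact weakSubintegral_of_proj_homeomorph_general hIm.ge
    (@Homeomorph.injective _ _ (projTopology _) (projTopology _) e) he
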